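/- Any ℓ²-sum ℓ²(X) = (⊕_{i<ω} X)_2 of copies of a Banach space X is finitely representable in any of its closed subspaces of finite codimension. -/

import Mathlib

/-- `W` is finitely representable in `V`. -/
def FinitelyRepresentable (W V : Type*) [NormedAddCommGroup W] [NormedSpace ℝ W]
    [NormedAddCommGroup V] [NormedSpace ℝ V] : Prop :=
  ∀ ε : ℝ, 0 < ε → ∀ A : Subspace ℝ W, FiniteDimensional ℝ A →
    ∃ (B : Subspace ℝ V) (u : ↥A ≃L[ℝ] ↥B),
      ‖(u : ↥A →L[ℝ] ↥B)‖ * ‖(u.symm : ↥B →L[ℝ] ↥A)‖ ≤ 1 + ε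

/-!
For a scalar sequence `c ∈ ℓᵖ` and `x ∈ ℓᵖ(X)`, the family `c ⊗ x = (c a • x b)` indexed by pairs
`(a, b)` lies in `ℓᵖ(X)` after identifying the set of pairs with the index set, and
`‖c ⊗ x‖ = ‖c‖ * ‖x‖`. Let `A` be a finite-dimensional subspace of `ℓᵖ(X)` and let `V` have finite
codimension. The linear map sending `c` to `x ↦ c ⊗ x mod V` takes values in the
finite-dimensional space `A →ₗ ℓᵖ(X) ⧸ V`, whereas `ℓᵖ` is infinite-dimensional, so some unit
vector `c` is in its kernel. Then `x ↦ c ⊗ x` embeds `A` isometrically into `V`.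
-/

open scoped ENNReal

theorem exists_ne_zero_forall_apply_mem {K F E W : Type*} [Field K] [AddCommGroup F] [Module K F]
    [AddCommGroup E] [Module K E] [AddCommGroup W] [Module K W] (T : F →ₗ[K] E →ₗ[K] W)
    (hF : ¬ FiniteDimensional K F) (A : Submodule K E) [FiniteDimensional K A]
    (V : Submodule K W) [FiniteDimensional K (W ⧸ V)] :
    ∃ c ≠ 0, ∀ x ∈ A, T c x ∈ V := by
  let L : F →ₗ[K] A →ₗ[K] W ⧸ V := T.compl₁₂ LinearMap.id A.subtype |>.compr₂ V.mkQ
  have hL : ¬ Function.Injective L := fun h => hF (.of_injective L h)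
  obtain ⟨c, hLc, hc⟩ : ∃ c, L c = 0 ∧ c ≠ 0 := by
    simpa [injective_iff_map_eq_zero] using hL
  refine ⟨c, hc, fun x hx => (Submodule.Quotient.mk_eq_zero V).1 ?_⟩
  exact LinearMap.congr_fun hLc ⟨x, hx⟩

theorem nonempty_linearIsometry_of_norm_apply_eq_mul {𝕜 F E W : Type*} [RCLike 𝕜]
    [NormedAddCommGroup F] [NormedSpace 𝕜 F] [SeminormedAddCommGroup E] [NormedSpace 𝕜 E]
    [SeminormedAddCommGroup W] [NormedSpace 𝕜 W] (T : F →ₗ[𝕜] E →ₗ[𝕜] W)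
    (hT : ∀ c x, ‖T c x‖ = ‖c‖ * ‖x‖) (hF : ¬ FiniteDimensional 𝕜 F)
    (A : Submodule 𝕜 E) [FiniteDimensional 𝕜 A]
    (V : Submodule 𝕜 W) [FiniteDimensional 𝕜 (W ⧸ V)] :
    Nonempty (A →ₗᵢ[𝕜] V) := by
  obtain ⟨c, hc, hcV⟩ := exists_ne_zero_forall_apply_mem T hF A V
  let d : F := (‖c‖⁻¹ : 𝕜) • c
  have hd : ‖d‖ = 1 := norm_smul_inv_norm hc
  have hdV : ∀ x : A, T d x ∈ V := fun x => by
    simpa only [d, map_smul, LinearMap.smul_apply] using V.smul_mem _ (hcV x x.2)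
  exact ⟨⟨(T d ∘ₗ A.subtype).codRestrict V hdV, fun x => by
    change ‖T d x‖ = ‖(x : E)‖
    rw [hT, hd, one_mul]⟩⟩

theorem FinitelyRepresentable.of_forall_nonempty_linearIsometry {W V : Type*} [NormedAddCommGroup W]
    [NormedSpace ℝ W] [NormedAddCommGroup V] [NormedSpace ℝ V]
    (h : ∀ A : Subspace ℝ W, FiniteDimensional ℝ A → Nonempty (A →ₗᵢ[ℝ] V)) :
    FinitelyRepresentable W V := by
  intro ε hε A hA
  obtain ⟨I⟩ := h A hA
  let u : A ≃ₗᵢ[ℝ] I.range := I.equivRange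
  refine ⟨_, u.toContinuousLinearEquiv, ?_⟩
  calc _ ≤ (1 : ℝ) * 1 := mul_le_mul u.toLinearIsometry.norm_toContinuousLinearMap_le
        u.symm.toLinearIsometry.norm_toContinuousLinearMap_le (norm_nonneg _) zero_le_one
    _ ≤ 1 + ε := by linarith

theorem not_finiteDimensional_lp {ι 𝕜 : Type*} [Infinite ι] [NormedField 𝕜] (p : ℝ≥0∞) :
    ¬ FiniteDimensional 𝕜 (lp (fun _ : ι => 𝕜) p) := by
  intro _
  have hinj : Function.Injective (lp.linearMapOfLE 𝕜 (fun _ : ι => 𝕜) (zero_le (a := p))) :=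
    fun f g hfg => Subtype.ext (congrArg Subtype.val hfg :)
  have : FiniteDimensional 𝕜 (lp (fun _ : ι => 𝕜) 0) := .of_injective _ hinj
  have : Finite ι := Module.Finite.finite_basis (lp.zeroBasis (𝕜 := 𝕜))
  exact not_finite ι

section Tensor

variable {𝕜 α β γ : Type*} {E : β → Type*} [NormedField 𝕜] [∀ b, NormedAddCommGroup (E b)]
  [∀ b, NormedSpace 𝕜 (E b)] {p : ℝ≥0∞} (e : γ ≃ α × β)

theorem hasSum_norm_prod_smul_rpow (hp : 0 < p.toReal) (c : lp (fun _ : α => 𝕜) p) (x : lp E p) :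
    HasSum (fun i => ‖c (e i).1 • x (e i).2‖ ^ p.toReal)
      (‖c‖ ^ p.toReal * ‖x‖ ^ p.toReal) := by
  have hc := lp.hasSum_norm hp c
  have hx := lp.hasSum_norm hp x
  have hcx := hc.mul hx <|
    hc.summable.mul_of_nonneg hx.summable (fun _ => by positivity) fun _ => by positivity
  simpa only [Function.comp_def, norm_smul, Real.mul_rpow (norm_nonneg _) (norm_nonneg _)]
    using e.hasSum_iff.2 hcx

theorem norm_prod_smul_le (hp : p ≠ 0) (c : lp (fun _ : α => 𝕜) p) (x : lp E p) (q : α × β) :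
    ‖c q.1 • x q.2‖ ≤ ‖c‖ * ‖x‖ := by
  rw [norm_smul]
  exact mul_le_mul (lp.norm_apply_le_norm hp c q.1) (lp.norm_apply_le_norm hp x q.2)
    (norm_nonneg _) (lp.norm_nonneg' c)

theorem memℓp_prod_smul (c : lp (fun _ : α => 𝕜) p) (x : lp E p) :
    Memℓp (fun i => c (e i).1 • x (e i).2) p := by
  rcases p.trichotomy with rfl | rfl | hp
  · have hsupp := (lp.memℓp c).finite_dsupport.prod (lp.memℓp x).finite_dsupport
    refine memℓp_zero <| (hsupp.preimage e.injective.injOn).subset fun i hi => ?_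
    exact smul_ne_zero_iff.1 hi
  · exact memℓp_infty ⟨‖c‖ * ‖x‖, Set.forall_mem_range.2 fun i =>
      norm_prod_smul_le ENNReal.top_ne_zero c x (e i)⟩
  · exact memℓp_gen (hasSum_norm_prod_smul_rpow e hp c x).summable

/-- The tensor product `c ⊗ x = (c a • x b)` of a scalar family and a vector family, as a bilinear
map on `ℓᵖ` spaces. The pairs `(a, b)` are indexed through `e`. -/
noncomputable def lpTensor : lp (fun _ : α => 𝕜) p →ₗ[𝕜] lp E p →ₗ[𝕜] lp (fun i => E (e i).2) p :=
  LinearMap.mk₂ 𝕜 (fun c x => ⟨fun i => c (e i).1 • x (e i).2, memℓp_prod_smul e c x⟩)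
    (fun _ _ _ => lp.ext <| funext fun _ => add_smul _ _ _)
    (fun _ _ _ => lp.ext <| funext fun _ => mul_smul _ _ _)
    (fun _ _ _ => lp.ext <| funext fun _ => smul_add _ _ _)
    (fun _ _ _ => lp.ext <| funext fun _ => smul_comm _ _ _)

@[simp]
theorem lpTensor_apply (c : lp (fun _ : α => 𝕜) p) (x : lp E p) (i : γ) :
    lpTensor e c x i = c (e i).1 • x (e i).2 :=
  rfl

theorem norm_lpTensor_top (c : lp (fun _ : α => 𝕜) ∞) (x : lp E ∞) :
    ‖lpTensor e c x‖ = ‖c‖ * ‖x‖ := by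
  apply le_antisymm
  · exact lp.norm_le_of_forall_le (by positivity) fun i =>
      norm_prod_smul_le ENNReal.top_ne_zero c x (e i)
  · have hle : ∀ q : α × β, ‖c q.1‖ * ‖x q.2‖ ≤ ‖lpTensor e c x‖ :=
      e.surjective.forall.2 fun i => by
        simpa only [lpTensor_apply, norm_smul] using
          lp.norm_apply_le_norm ENNReal.top_ne_zero (lpTensor e c x) i
    rw [lp.norm_eq_ciSup c, Real.iSup_mul_of_nonneg (norm_nonneg x)]
    refine Real.iSup_le (fun a => ?_) (lp.norm_nonneg' _)
    rw [lp.norm_eq_ciSup x, Real.mul_iSup_of_nonneg (norm_nonneg _)]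
    exact Real.iSup_le (fun b => hle (a, b)) (norm_nonneg _)

theorem norm_lpTensor (hp₀ : p ≠ 0) (c : lp (fun _ : α => 𝕜) p) (x : lp E p) :
    ‖lpTensor e c x‖ = ‖c‖ * ‖x‖ := by
  rcases p.trichotomy with rfl | rfl | hp
  · exact absurd rfl hp₀
  · exact norm_lpTensor_top e c x
  · have hc := lp.norm_nonneg' c
    have hx := lp.norm_nonneg' x
    rw [← Real.rpow_left_inj (lp.norm_nonneg' _) (mul_nonneg hc hx) hp.ne', Real.mul_rpow hc hx]
    exact (lp.hasSum_norm hp _).unique (hasSum_norm_prod_smul_rpow e hp c x)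

end Tensor

theorem lpTwoSum_finitelyRepresentable_in_finite_codim_subspace_general
    {ι X : Type*} [Infinite ι] [NormedAddCommGroup X] [NormedSpace ℝ X]
    {p : ℝ≥0∞} [Fact (1 ≤ p)] (V : Subspace ℝ (lp (fun _ : ι => X) p))
    [FiniteDimensional ℝ (lp (fun _ : ι => X) p ⧸ V)] :
    FinitelyRepresentable (lp (fun _ : ι => X) p) V := by
  obtain ⟨e⟩ : Nonempty (ι ≃ ι × ι) := Cardinal.eq.1 <| by
    rw [Cardinal.mk_prod, Cardinal.lift_id, Cardinal.mul_eq_self (Cardinal.aleph0_le_mk ι)]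
  have hp : p ≠ 0 := (zero_lt_one.trans_le Fact.out).ne'
  exact .of_forall_nonempty_linearIsometry fun A _ =>
    nonempty_linearIsometry_of_norm_apply_eq_mul (lpTensor e) (norm_lpTensor e hp)
      (not_finiteDimensional_lp p) A V

/-- The ℓ²-sum `ℓ²(X)` of countably many copies of a Banach space `X` is finitely
representable in each of its closed subspaces of finite codimension. -/
theorem lpTwoSum_finitelyRepresentable_in_finite_codim_subspace
    {X : Type*} [NormedAddCommGroup X] [NormedSpace ℝ X] [CompleteSpace X]
    (V : Subspace ℝ (lp (fun _ : ℕ => X) 2))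
    (hV : IsClosed (V : Set (lp (fun _ : ℕ => X) 2)))
    (hcodim : FiniteDimensional ℝ (lp (fun _ : ℕ => X) 2 ⧸ V)) :
    FinitelyRepresentable (lp (fun _ : ℕ => X) 2) ↥V :=
  lpTwoSum_finitelyRepresentable_in_finite_codim_subspace_general V
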